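/- arXiv:2103.00050 — 7 statements merged into one kernel-verified Lean document; each statement's English description precedes it below -/
import Mathlib

section
/- Let γ be a Legendre trajectory for strength q ≠ 0 in the model, given as a Frenet curve E₁,…,E_r of osculating order r ≥ 2. Then κ₁(t) = |q| for all t (so the first curvature is constant), E₂ = δ·φT where δ = sgn(−q), and the structure functions β_i vanish identically along the curve; moreover, if r = 2 then also α_i vanishes identically along the curve for every i (so γ is a Legendre circle with Frenet frame {T, δ·φT}). -/
/-!
Skew-symmetry of `φ` together with `φ² = -1 + ∑ ξᵢ ⊗ ξᵢ` makes `φT` a unit vector orthogonal to `T` and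
to every `ξᵢ`. The Lorentz equation and the first Frenet equation give `κ₁ E₂ = -q φT`; taking norms
yields `κ₁ = |q|`, and dividing by it yields `E₂ = sgn(-q) φT`.

The structure functions come from differentiating orthogonality relations against
`ξᵢ' = -αᵢ φT + βᵢ T` (`inner_deriv_add_eq_zero`): from `⟪T, ξᵢ⟫ = 0` one reads off `βᵢ = 0`. If `r = 2`,
then `E₂' = -κ₁ T` is orthogonal to `ξᵢ`, so `⟪E₂, ξᵢ⟫ = 0` gives `sgn(-q) αᵢ = 0`.
-/

open RealInnerProductSpace

/-- The product rule for two vector fields that stay orthogonal. -/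
theorem inner_deriv_add_eq_zero {E : Type*} [NormedAddCommGroup E] [InnerProductSpace ℝ E]
    {f g : ℝ → E} (hf : ContDiff ℝ (⊤ : ℕ∞) f) (hg : ContDiff ℝ (⊤ : ℕ∞) g)
    (h : ∀ t, ⟪f t, g t⟫ = (0 : ℝ)) (t : ℝ) :
    ⟪f t, deriv g t⟫ + ⟪deriv f t, g t⟫ = (0 : ℝ) := by
  have hd := ((hf.differentiable (by simp)) t).hasDerivAt.inner ℝ
    ((hg.differentiable (by simp)) t).hasDerivAt
  simp only [h] at hd
  exact hd.unique (hasDerivAt_const t (0 : ℝ))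

theorem stmt_5
    {E : Type*} [NormedAddCommGroup E] [InnerProductSpace ℝ E]
    (s r : ℕ) (hs : 1 ≤ s) (hr : 2 ≤ r)
    (vec : ℕ → ℝ → E) (κ : ℕ → ℝ → ℝ)
    (hvec_smooth : ∀ j, ContDiff ℝ (⊤ : ℕ∞) (vec j))
    (hκ_smooth : ∀ j, ContDiff ℝ (⊤ : ℕ∞) (κ j))
    (horth : ∀ t : ℝ, ∀ i ∈ Finset.Icc 1 r, ∀ j ∈ Finset.Icc 1 r,
        ⟪vec i t, vec j t⟫ = if i = j then (1 : ℝ) else 0)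
    (hκ_pos : ∀ j, 1 ≤ j → j ≤ r - 1 → ∀ t : ℝ, 0 < κ j t)
    (hκ_zero : ∀ j, j = 0 ∨ r ≤ j → κ j = 0)
    (hvec_zero : ∀ j, j = 0 ∨ r < j → vec j = 0)
    (hfrenet : ∀ j, 1 ≤ j → j ≤ r → ∀ t : ℝ,
        deriv (vec j) t = -(κ (j - 1) t) • vec (j - 1) t + κ j t • vec (j + 1) t)
    (ξ : Fin s → ℝ → E)
    (hξ_smooth : ∀ i, ContDiff ℝ (⊤ : ℕ∞) (ξ i))
    (hξ_orth : ∀ t : ℝ, ∀ i j : Fin s, ⟪ξ i t, ξ j t⟫ = if i = j then (1 : ℝ) else 0)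
    (hLeg : ∀ (t : ℝ) (i : Fin s), ⟪vec 1 t, ξ i t⟫ = 0)
    (φ : ℝ → E →L[ℝ] E) (hφ_smooth : ContDiff ℝ (⊤ : ℕ∞) φ)
    (hφ_skew : ∀ (t : ℝ) (x y : E), ⟪φ t x, y⟫ = -⟪x, φ t y⟫)
    (hφ_ξ : ∀ (t : ℝ) (i : Fin s), φ t (ξ i t) = 0)
    (hφ_sq : ∀ (t : ℝ) (x : E), φ t (φ t x) = -x + ∑ i, ⟪x, ξ i t⟫ • ξ i t)
    (α β : Fin s → ℝ → ℝ)
    (hα_smooth : ∀ i, ContDiff ℝ (⊤ : ℕ∞) (α i)) (hβ_smooth : ∀ i, ContDiff ℝ (⊤ : ℕ∞) (β i))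
    (hξ_deriv : ∀ (i : Fin s) (t : ℝ),
        deriv (ξ i) t = -(α i t) • φ t (vec 1 t) - β i t • φ t (φ t (vec 1 t)))
    (hnablaφ : ∀ Y : ℝ → E, ContDiff ℝ (⊤ : ℕ∞) Y → ∀ t : ℝ,
        deriv (fun u => φ u (Y u)) t - φ t (deriv Y t) =
          ∑ i, (α i t • (⟪φ t (vec 1 t), φ t (Y t)⟫ • ξ i t
                  + ⟪Y t, ξ i t⟫ • φ t (φ t (vec 1 t)))
              + β i t • (⟪φ t (vec 1 t), Y t⟫ • ξ i t - ⟪Y t, ξ i t⟫ • φ t (vec 1 t))))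
    (q : ℝ) (hq : q ≠ 0)
    (hLorentz : ∀ t : ℝ, deriv (vec 1) t = -q • φ t (vec 1 t))
    :
    (∀ t : ℝ, κ 1 t = |q|) ∧
    (∀ t : ℝ, vec 2 t = Real.sign (-q) • φ t (vec 1 t)) ∧
    (∀ (i : Fin s) (t : ℝ), β i t = 0) ∧
    (r = 2 → ∀ (i : Fin s) (t : ℝ), α i t = 0) := by
  have hTT : ∀ t, ⟪vec 1 t, vec 1 t⟫ = (1 : ℝ) := fun t => by
    simpa using horth t 1 (by simp; omega) 1 (by simp; omega)
  have h22 : ∀ t, ⟪vec 2 t, vec 2 t⟫ = (1 : ℝ) := fun t => by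
    simpa using horth t 2 (by simp; omega) 2 (by simp; omega)
  have hφφ : ∀ t, φ t (φ t (vec 1 t)) = -vec 1 t := fun t => by
    simp [hφ_sq, hLeg]
  have hPP : ∀ t, ⟪φ t (vec 1 t), φ t (vec 1 t)⟫ = (1 : ℝ) := fun t => by
    rw [hφ_skew, hφφ, inner_neg_right, hTT, neg_neg]
  have hTP : ∀ t, ⟪vec 1 t, φ t (vec 1 t)⟫ = (0 : ℝ) := fun t => by
    have h := hφ_skew t (vec 1 t) (vec 1 t)
    rw [real_inner_comm] at h
    linarith
  have hPξ : ∀ t i, ⟪φ t (vec 1 t), ξ i t⟫ = (0 : ℝ) := fun t i => by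
    rw [hφ_skew, hφ_ξ, inner_zero_right, neg_zero]
  have hκ2 : ∀ t, κ 1 t • vec 2 t = -q • φ t (vec 1 t) := fun t => by
    have h := hfrenet 1 le_rfl (by omega) t
    rw [hLorentz] at h
    simpa [hκ_zero 0 (Or.inl rfl)] using h.symm
  have hκpos : ∀ t, 0 < κ 1 t := hκ_pos 1 le_rfl (by omega)
  have hκ : ∀ t, κ 1 t = |q| := fun t => by
    have h : ⟪κ 1 t • vec 2 t, κ 1 t • vec 2 t⟫ = (q * q : ℝ) := by
      rw [hκ2]
      rw [real_inner_smul_left, real_inner_smul_right, hPP]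
      ring
    simp only [real_inner_smul_left, real_inner_smul_right, h22, mul_one] at h
    rw [← abs_of_pos (hκpos t)]
    exact abs_eq_abs.mpr (mul_self_eq_mul_self_iff.mp h)
  have hE2 : ∀ t, vec 2 t = Real.sign (-q) • φ t (vec 1 t) := fun t => by
    have hsign : -q = |q| * Real.sign (-q) := by
      rcases lt_or_gt_of_ne hq with h | h
      · rw [Real.sign_of_pos (by linarith), abs_of_neg h, mul_one]
      · rw [Real.sign_of_neg (by linarith), abs_of_pos h, mul_neg_one]
    have h := hκ2 t
    rw [hκ, hsign, mul_smul] at h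
    exact smul_right_injective E (abs_ne_zero.mpr hq) h
  have hβ : ∀ i t, β i t = 0 := fun i t => by
    have h := inner_deriv_add_eq_zero (hvec_smooth 1) (hξ_smooth i) (fun u => hLeg u i) t
    rw [hξ_deriv, hLorentz, hφφ] at h
    simp only [inner_sub_right, inner_neg_right, real_inner_smul_left, real_inner_smul_right,
      hTT, hTP, hPξ] at h
    linarith
  refine ⟨hκ, hE2, hβ, ?_⟩
  rintro rfl i t
  have h2ξ : ∀ u, ⟪vec 2 u, ξ i u⟫ = (0 : ℝ) := fun u => by
    rw [hE2, real_inner_smul_left, hPξ, mul_zero]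
  have h := inner_deriv_add_eq_zero (hvec_smooth 2) (hξ_smooth i) h2ξ t
  have hsign : Real.sign (-q) ≠ 0 := by simpa [Real.sign_eq_zero_iff] using hq
  have hd : deriv (vec 2) t = -(κ 1 t) • vec 1 t := by
    rw [hfrenet 2 (by omega) le_rfl, hκ_zero 2 (Or.inr le_rfl)]
    simp
  rw [hξ_deriv, hd, hβ, hE2] at h
  simp only [zero_smul, sub_zero, real_inner_smul_left, real_inner_smul_right, hPP, hLeg] at h
  have h' : Real.sign (-q) * α i t = 0 := by linarith
  exact (mul_eq_zero.mp h').resolve_left hsign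
end

section
/- Let γ be a Legendre trajectory for strength q ≠ 0 in the model, given as a Frenet curve E₁,…,E_r of osculating order r ≥ 3, and set δ = sgn(−q). Then κ₂·E₃ = δ·Σ_{i=1}^s α_i ξ_i pointwise; consequently κ₂(t) = √(Σ_{i=1}^s α_i(t)²) for all t (in particular Σ_i α_i(t)² is nowhere zero) and E₃ = δ·(Σ_{i=1}^s α_i ξ_i)/√(Σ_{i=1}^s α_i²). -/
/-!
Write `δ = sign (-q)`. The curve is Legendre, so `φ (φ T) = -T`, and skew-adjointness makes `φ T` a unit
vector orthogonal to `T`. Comparing the Lorentz equation `T' = -q φT` with `T' = κ₁ E₂` gives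
`κ₁ = |q|` and `E₂ = δ φT`. For `Y = T` the structure equation reduces to
`(φT)' = φ(T') + ∑ αᵢ ξᵢ = q T + ∑ αᵢ ξᵢ`, hence `E₂' = -κ₁ T + δ ∑ αᵢ ξᵢ`, while the Frenet equation says
`E₂' = -κ₁ T + κ₂ E₃`. Thus `κ₂ E₃ = δ ∑ αᵢ ξᵢ`; the remaining claims follow by taking norms, since `E₃` is a
unit vector, `κ₂ > 0`, and the `ξᵢ` are orthonormal.
-/


open RealInnerProductSpace

theorem stmt_6
    {E : Type*} [NormedAddCommGroup E] [InnerProductSpace ℝ E]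
    (s r : ℕ) (hs : 1 ≤ s) (hr : 3 ≤ r)
    (vec : ℕ → ℝ → E) (κ : ℕ → ℝ → ℝ)
    (hvec_smooth : ∀ j, ContDiff ℝ (⊤ : ℕ∞) (vec j))
    (hκ_smooth : ∀ j, ContDiff ℝ (⊤ : ℕ∞) (κ j))
    (horth : ∀ t : ℝ, ∀ i ∈ Finset.Icc 1 r, ∀ j ∈ Finset.Icc 1 r,
        ⟪vec i t, vec j t⟫ = if i = j then (1 : ℝ) else 0)
    (hκ_pos : ∀ j, 1 ≤ j → j ≤ r - 1 → ∀ t : ℝ, 0 < κ j t)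
    (hκ_zero : ∀ j, j = 0 ∨ r ≤ j → κ j = 0)
    (hvec_zero : ∀ j, j = 0 ∨ r < j → vec j = 0)
    (hfrenet : ∀ j, 1 ≤ j → j ≤ r → ∀ t : ℝ,
        deriv (vec j) t = -(κ (j - 1) t) • vec (j - 1) t + κ j t • vec (j + 1) t)
    (ξ : Fin s → ℝ → E)
    (hξ_smooth : ∀ i, ContDiff ℝ (⊤ : ℕ∞) (ξ i))
    (hξ_orth : ∀ t : ℝ, ∀ i j : Fin s, ⟪ξ i t, ξ j t⟫ = if i = j then (1 : ℝ) else 0)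
    (hLeg : ∀ (t : ℝ) (i : Fin s), ⟪vec 1 t, ξ i t⟫ = 0)
    (φ : ℝ → E →L[ℝ] E) (hφ_smooth : ContDiff ℝ (⊤ : ℕ∞) φ)
    (hφ_skew : ∀ (t : ℝ) (x y : E), ⟪φ t x, y⟫ = -⟪x, φ t y⟫)
    (hφ_ξ : ∀ (t : ℝ) (i : Fin s), φ t (ξ i t) = 0)
    (hφ_sq : ∀ (t : ℝ) (x : E), φ t (φ t x) = -x + ∑ i, ⟪x, ξ i t⟫ • ξ i t)
    (α β : Fin s → ℝ → ℝ)
    (hα_smooth : ∀ i, ContDiff ℝ (⊤ : ℕ∞) (α i)) (hβ_smooth : ∀ i, ContDiff ℝ (⊤ : ℕ∞) (β i))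
    (hξ_deriv : ∀ (i : Fin s) (t : ℝ),
        deriv (ξ i) t = -(α i t) • φ t (vec 1 t) - β i t • φ t (φ t (vec 1 t)))
    (hnablaφ : ∀ Y : ℝ → E, ContDiff ℝ (⊤ : ℕ∞) Y → ∀ t : ℝ,
        deriv (fun u => φ u (Y u)) t - φ t (deriv Y t) =
          ∑ i, (α i t • (⟪φ t (vec 1 t), φ t (Y t)⟫ • ξ i t
                  + ⟪Y t, ξ i t⟫ • φ t (φ t (vec 1 t)))
              + β i t • (⟪φ t (vec 1 t), Y t⟫ • ξ i t - ⟪Y t, ξ i t⟫ • φ t (vec 1 t))))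
    (q : ℝ) (hq : q ≠ 0)
    (hLorentz : ∀ t : ℝ, deriv (vec 1) t = -q • φ t (vec 1 t))
    :
    (∀ t : ℝ, κ 2 t • vec 3 t = Real.sign (-q) • ∑ i, α i t • ξ i t) ∧
    (∀ t : ℝ, κ 2 t = Real.sqrt (∑ i, (α i t) ^ 2)) ∧
    (∀ t : ℝ, (∑ i, (α i t) ^ 2) ≠ 0) ∧
    (∀ t : ℝ, vec 3 t = Real.sign (-q) • (Real.sqrt (∑ i, (α i t) ^ 2))⁻¹ • ∑ i, α i t • ξ i t) := by
  -- `δ` is treated as a number with `δ² = 1` and `δ |q| = -q`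
  obtain ⟨hδδ, hδq⟩ : Real.sign (-q) * Real.sign (-q) = 1 ∧ Real.sign (-q) * |q| = -q := by
    rcases lt_or_gt_of_ne hq with h | h
    · rw [Real.sign_of_pos (by linarith), abs_of_neg h]; norm_num
    · rw [Real.sign_of_neg (by linarith), abs_of_pos h]; norm_num
  generalize Real.sign (-q) = δ at hδδ hδq ⊢
  have hunit : ∀ j, 1 ≤ j → j ≤ r → ∀ t, ‖vec j t‖ = 1 := by
    intro j h1 h2 t
    have hj : j ∈ Finset.Icc 1 r := Finset.mem_Icc.2 ⟨h1, h2⟩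
    have h := horth t j hj j hj
    rw [if_pos rfl, real_inner_self_eq_norm_sq] at h
    exact (pow_eq_one_iff_of_nonneg (norm_nonneg _) two_ne_zero).1 h
  have hφφT : ∀ t, φ t (φ t (vec 1 t)) = -vec 1 t := by
    intro t
    simp [hφ_sq, hLeg]
  have hφT_inner : ∀ t, ⟪φ t (vec 1 t), φ t (vec 1 t)⟫ = (1 : ℝ) := by
    intro t
    rw [hφ_skew, hφφT, inner_neg_right, neg_neg, real_inner_self_eq_norm_sq,
      hunit 1 le_rfl (by omega)]
    norm_num
  have hφT_norm : ∀ t, ‖φ t (vec 1 t)‖ = 1 := by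
    intro t
    have h := hφT_inner t
    rw [real_inner_self_eq_norm_sq] at h
    exact (pow_eq_one_iff_of_nonneg (norm_nonneg _) two_ne_zero).1 h
  have hφT_T : ∀ t, ⟪φ t (vec 1 t), vec 1 t⟫ = (0 : ℝ) := by
    intro t
    have h := hφ_skew t (vec 1 t) (vec 1 t)
    rw [real_inner_comm (φ t (vec 1 t)) (vec 1 t)] at h
    linarith
  have hE2_scaled : ∀ t, κ 1 t • vec 2 t = -q • φ t (vec 1 t) := by
    intro t
    have h := hfrenet 1 le_rfl (by omega) t
    rw [hLorentz] at h
    simpa [hκ_zero 0 (Or.inl rfl)] using h.symm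
  have hκ1 : ∀ t, κ 1 t = |q| := by
    intro t
    have h := congrArg norm (hE2_scaled t)
    rwa [norm_smul, norm_smul, hunit 2 (by omega) (by omega), hφT_norm, mul_one, mul_one, norm_neg,
      Real.norm_eq_abs, Real.norm_eq_abs, abs_of_pos (hκ_pos 1 le_rfl (by omega) t)] at h
  have hE2 : vec 2 = fun t => δ • φ t (vec 1 t) := by
    funext t
    have h := hE2_scaled t
    rw [hκ1, ← hδq, mul_comm, mul_smul] at h
    exact smul_right_injective E (abs_ne_zero.2 hq) h
  have hφT_deriv : ∀ t, deriv (fun u => φ u (vec 1 u)) t = q • vec 1 t + ∑ i, α i t • ξ i t := by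
    intro t
    have h := hnablaφ (vec 1) (hvec_smooth 1) t
    simp only [hLorentz, map_smul, hφφT, hφT_inner, hφT_T, hLeg, zero_smul, one_smul, sub_zero,
      add_zero, smul_zero] at h
    rw [sub_eq_iff_eq_add] at h
    rw [h, smul_neg, neg_smul, neg_neg, add_comm]
  have hmain : ∀ t, κ 2 t • vec 3 t = δ • ∑ i, α i t • ξ i t := by
    intro t
    have h := hfrenet 2 (by omega) (by omega) t
    have hδκ : δ * q = -|q| := by
      linear_combination δ * hδq - |q| * hδδ
    rw [hE2, deriv_fun_const_smul_field, hφT_deriv, smul_add, smul_smul, hδκ] at h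
    simp only [Nat.reduceSub, Nat.reduceAdd, hκ1] at h
    exact (add_left_cancel h).symm
  have hκ2_pos : ∀ t, 0 < κ 2 t := hκ_pos 2 (by omega) (by omega)
  have hκ2_sq : ∀ t, κ 2 t ^ 2 = ∑ i, (α i t) ^ 2 := by
    intro t
    have hξ : Orthonormal ℝ (fun i => ξ i t) := orthonormal_iff_ite.2 (hξ_orth t)
    have hsum : ⟪∑ i, α i t • ξ i t, ∑ i, α i t • ξ i t⟫ = ∑ i, (α i t) ^ 2 := by
      rw [hξ.inner_sum]
      simp [sq]
    have h : ⟪κ 2 t • vec 3 t, κ 2 t • vec 3 t⟫ = κ 2 t ^ 2 := by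
      rw [real_inner_self_eq_norm_sq, norm_smul, hunit 3 (by omega) hr, mul_one, Real.norm_eq_abs,
        sq_abs]
    rw [← h, hmain, real_inner_smul_left, real_inner_smul_right, ← mul_assoc, hδδ, one_mul, hsum]
  have hκ2 : ∀ t, κ 2 t = Real.sqrt (∑ i, (α i t) ^ 2) := by
    intro t
    rw [← hκ2_sq, Real.sqrt_sq (hκ2_pos t).le]
  refine ⟨hmain, hκ2, fun t => ?_, fun t => ?_⟩
  · rw [← hκ2_sq]
    exact pow_ne_zero 2 (hκ2_pos t).ne'
  · rw [← hκ2, smul_comm, ← hmain, inv_smul_smul₀ (hκ2_pos t).ne']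
end

section
/- Let γ be a Legendre trajectory for strength q ≠ 0 in the model, given as a Frenet curve E₁,…,E_r of osculating order r ≥ 4, and set δ = sgn(−q). Then κ₃·E₄ = δ·Σ_{i=1}^s (α_i/√(Σ_{j=1}^s α_j²))′ ξ_i pointwise, and consequently κ₃(t) = √( Σ_{i=1}^s [ (α_i/√(Σ_{j=1}^s α_j²))′(t) ]² ) for all t. -/
/-!
Write `T = vec 1` and `δ = sign (-q)`. As `T ⟂ ξ i`, we have `φφT = -T`, so `φT` is a unit vector, and
it is orthogonal to `T` and to each `ξ i`. The argument computes the Frenet frame one vector at a time.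

* The Lorentz equation and `T' = κ₁ E₂` give `κ₁ = |q|` and `E₂ = δ φT`.
* Differentiating `⟪T, ξ i⟫ = 0` gives `β i = 0`, so `(ξ i)' = -α i φT`.
* The equation for the derivative of `φ` with `Y = T` gives `(φT)' = q T + ∑ α i ξ i`. Comparing with
  `E₂' = -κ₁ T + κ₂ E₃` yields `κ₂ E₃ = δ ∑ α i ξ i`, hence `κ₂ = √(∑ (α i)²)`.
* With `a i = α i / κ₂` we get `E₃ = δ ∑ a i ξ i`. In its derivative the terms `-δ ∑ a i α i φT` add up
  to `-κ₂ E₂`, which is the first term of the Frenet equation for `E₃`; what remains is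
  `κ₃ E₄ = δ ∑ (a i)' ξ i`. The formula for `κ₃` follows by taking norms.

The curvatures `κ₂` and `κ₃` are both read off by the same lemma, `eq_sqrt_of_smul_eq`.
-/

open RealInnerProductSpace

/-- If a positive multiple `k • e` of a unit vector equals, up to a sign, a combination of an
orthonormal family, then `k` is the Euclidean norm of the coefficients: compare squared norms. -/
theorem eq_sqrt_of_smul_eq {E : Type*} [NormedAddCommGroup E] [InnerProductSpace ℝ E] {s : ℕ}
    {k δ : ℝ} {e : E} {x : Fin s → E} {c : Fin s → ℝ} (hk : 0 < k) (hδ : δ * δ = 1)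
    (he : ⟪e, e⟫ = (1 : ℝ)) (hx : ∀ i j : Fin s, ⟪x i, x j⟫ = if i = j then (1 : ℝ) else 0)
    (h : k • e = δ • ∑ i, c i • x i) : k = Real.sqrt (∑ i, c i ^ 2) := by
  have h2 : ⟪k • e, k • e⟫ = ⟪δ • ∑ i, c i • x i, δ • ∑ i, c i • x i⟫ := by rw [h]
  have h3 : ⟪∑ i, c i • x i, ∑ i, c i • x i⟫ = ∑ i, c i ^ 2 := by
    simp only [sum_inner, inner_sum, real_inner_smul_left, real_inner_smul_right, hx]
    simp [sq]
  simp only [real_inner_smul_left, real_inner_smul_right, he, h3] at h2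
  have h4 : k ^ 2 = ∑ i, c i ^ 2 := by
    linear_combination h2 + (∑ i, c i ^ 2) * hδ
  rw [← h4, Real.sqrt_sq hk.le]

theorem stmt_7
    {E : Type*} [NormedAddCommGroup E] [InnerProductSpace ℝ E]
    (s r : ℕ) (hs : 1 ≤ s) (hr : 4 ≤ r)
    (vec : ℕ → ℝ → E) (κ : ℕ → ℝ → ℝ)
    (hvec_smooth : ∀ j, ContDiff ℝ (⊤ : ℕ∞) (vec j))
    (hκ_smooth : ∀ j, ContDiff ℝ (⊤ : ℕ∞) (κ j))
    (horth : ∀ t : ℝ, ∀ i ∈ Finset.Icc 1 r, ∀ j ∈ Finset.Icc 1 r,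
        ⟪vec i t, vec j t⟫ = if i = j then (1 : ℝ) else 0)
    (hκ_pos : ∀ j, 1 ≤ j → j ≤ r - 1 → ∀ t : ℝ, 0 < κ j t)
    (hκ_zero : ∀ j, j = 0 ∨ r ≤ j → κ j = 0)
    (hvec_zero : ∀ j, j = 0 ∨ r < j → vec j = 0)
    (hfrenet : ∀ j, 1 ≤ j → j ≤ r → ∀ t : ℝ,
        deriv (vec j) t = -(κ (j - 1) t) • vec (j - 1) t + κ j t • vec (j + 1) t)
    (ξ : Fin s → ℝ → E)
    (hξ_smooth : ∀ i, ContDiff ℝ (⊤ : ℕ∞) (ξ i))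
    (hξ_orth : ∀ t : ℝ, ∀ i j : Fin s, ⟪ξ i t, ξ j t⟫ = if i = j then (1 : ℝ) else 0)
    (hLeg : ∀ (t : ℝ) (i : Fin s), ⟪vec 1 t, ξ i t⟫ = 0)
    (φ : ℝ → E →L[ℝ] E) (hφ_smooth : ContDiff ℝ (⊤ : ℕ∞) φ)
    (hφ_skew : ∀ (t : ℝ) (x y : E), ⟪φ t x, y⟫ = -⟪x, φ t y⟫)
    (hφ_ξ : ∀ (t : ℝ) (i : Fin s), φ t (ξ i t) = 0)
    (hφ_sq : ∀ (t : ℝ) (x : E), φ t (φ t x) = -x + ∑ i, ⟪x, ξ i t⟫ • ξ i t)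
    (α β : Fin s → ℝ → ℝ)
    (hα_smooth : ∀ i, ContDiff ℝ (⊤ : ℕ∞) (α i)) (hβ_smooth : ∀ i, ContDiff ℝ (⊤ : ℕ∞) (β i))
    (hξ_deriv : ∀ (i : Fin s) (t : ℝ),
        deriv (ξ i) t = -(α i t) • φ t (vec 1 t) - β i t • φ t (φ t (vec 1 t)))
    (hnablaφ : ∀ Y : ℝ → E, ContDiff ℝ (⊤ : ℕ∞) Y → ∀ t : ℝ,
        deriv (fun u => φ u (Y u)) t - φ t (deriv Y t) =
          ∑ i, (α i t • (⟪φ t (vec 1 t), φ t (Y t)⟫ • ξ i t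
                  + ⟪Y t, ξ i t⟫ • φ t (φ t (vec 1 t)))
              + β i t • (⟪φ t (vec 1 t), Y t⟫ • ξ i t - ⟪Y t, ξ i t⟫ • φ t (vec 1 t))))
    (q : ℝ) (hq : q ≠ 0)
    (hLorentz : ∀ t : ℝ, deriv (vec 1) t = -q • φ t (vec 1 t))
    :
    (∀ t : ℝ, κ 3 t • vec 4 t =
        Real.sign (-q) • ∑ i, deriv (fun u => α i u / Real.sqrt (∑ j, (α j u) ^ 2)) t • ξ i t) ∧
    (∀ t : ℝ, κ 3 t =
        Real.sqrt (∑ i, (deriv (fun u => α i u / Real.sqrt (∑ j, (α j u) ^ 2)) t) ^ 2)) := by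
  have hdiff : ∀ j, Differentiable ℝ (vec j) := fun j => (hvec_smooth j).differentiable (by simp)
  have hξd : ∀ j, Differentiable ℝ (ξ j) := fun j => (hξ_smooth j).differentiable (by simp)
  have hαd : ∀ j, Differentiable ℝ (α j) := fun j => (hα_smooth j).differentiable (by simp)
  have hκd : ∀ j, Differentiable ℝ (κ j) := fun j => (hκ_smooth j).differentiable (by simp)
  have hunit : ∀ j, 1 ≤ j → j ≤ 4 → ∀ t, ⟪vec j t, vec j t⟫ = (1 : ℝ) := by
    intro j h1 h4 t
    have hj : j ∈ Finset.Icc 1 r := Finset.mem_Icc.2 ⟨h1, by omega⟩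
    simpa using horth t j hj j hj
  have hκ0 : ∀ t, κ 0 t = 0 := fun t => by simp [hκ_zero 0 (Or.inl rfl)]
  have hφφ : ∀ t, φ t (φ t (vec 1 t)) = -vec 1 t := fun t => by simp [hφ_sq, hLeg]
  have hφu : ∀ t, ⟪φ t (vec 1 t), φ t (vec 1 t)⟫ = (1 : ℝ) := by
    intro t
    rw [hφ_skew, hφφ, inner_neg_right, neg_neg, hunit 1 le_rfl (by norm_num)]
  have hφT : ∀ t, ⟪φ t (vec 1 t), vec 1 t⟫ = (0 : ℝ) := by
    intro t
    have h1 := hφ_skew t (vec 1 t) (vec 1 t)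
    rw [real_inner_comm (φ t (vec 1 t)) (vec 1 t)] at h1
    have h2 := real_inner_comm (φ t (vec 1 t)) (vec 1 t)
    linarith
  have hφξ : ∀ t i, ⟪φ t (vec 1 t), ξ i t⟫ = (0 : ℝ) := fun t i => by
    rw [hφ_skew, hφ_ξ, inner_zero_right, neg_zero]
  set δ := Real.sign (-q) with hδdef
  have hδ : δ * δ = 1 := by
    rcases lt_or_gt_of_ne (neg_ne_zero.2 hq) with h | h
    · rw [hδdef, Real.sign_of_neg h]; norm_num
    · rw [hδdef, Real.sign_of_pos h]; norm_num
  have hδq : |q| = -q * δ := by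
    rcases lt_or_gt_of_ne (neg_ne_zero.2 hq) with h | h
    · rw [hδdef, Real.sign_of_neg h, abs_of_pos (by linarith)]; ring
    · rw [hδdef, Real.sign_of_pos h, abs_of_neg (by linarith)]; ring
  have hT : ∀ t, κ 1 t • vec 2 t = -q • φ t (vec 1 t) := by
    intro t
    have h := hfrenet 1 le_rfl (by omega) t
    rw [hLorentz] at h
    simpa [hκ0] using h.symm
  have hκ1 : ∀ t, κ 1 t = -q * δ := by
    intro t
    have h : ⟪κ 1 t • vec 2 t, κ 1 t • vec 2 t⟫
        = ⟪-q • φ t (vec 1 t), -q • φ t (vec 1 t)⟫ := by rw [hT]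
    simp only [real_inner_smul_left, real_inner_smul_right, hφu,
      hunit 2 (by norm_num) (by norm_num)] at h
    rw [← hδq, ← abs_of_pos (hκ_pos 1 le_rfl (by omega) t)]
    exact (sq_eq_sq_iff_abs_eq_abs _ _).1 (by linarith)
  have hE2 : ∀ t, φ t (vec 1 t) = δ • vec 2 t := by
    intro t
    have h := hT t
    rw [hκ1, mul_smul] at h
    exact (smul_right_injective E (neg_ne_zero.2 hq) h).symm
  have hβ : ∀ i t, β i t = 0 := by
    intro i t
    have h : HasDerivAt (fun u => ⟪vec 1 u, ξ i u⟫)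
        (⟪vec 1 t, deriv (ξ i) t⟫ + ⟪deriv (vec 1) t, ξ i t⟫) t :=
      (hdiff 1 t).hasDerivAt.inner ℝ (hξd i t).hasDerivAt
    have h0 : (fun u => ⟪vec 1 u, ξ i u⟫) = fun _ => (0 : ℝ) := funext fun u => hLeg u i
    rw [h0] at h
    have h1 := h.unique (hasDerivAt_const t (0 : ℝ))
    rw [hξ_deriv, hLorentz, hφφ, inner_sub_right, real_inner_smul_right, real_inner_smul_right,
      real_inner_smul_left, hφξ, inner_neg_right, real_inner_comm, hφT,
      hunit 1 le_rfl (by norm_num)] at h1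
    linarith
  have hE3 : ∀ t, κ 2 t • vec 3 t = δ • ∑ i, α i t • ξ i t := by
    intro t
    have h := hnablaφ (vec 1) (hvec_smooth 1) t
    rw [funext hE2, deriv_fun_const_smul _ (hdiff 2 t), hfrenet 2 (by norm_num) (by omega),
      hLorentz, map_smul, hφφ] at h
    simp only [hφu, hLeg, hβ, zero_smul, one_smul, add_zero] at h
    rw [← h]
    norm_num only [hκ1]
    -- after multiplying out, the `vec 1` term here cancels against the one from `φ (deriv (vec 1) t)`
    have h5 : δ • δ • (-(-q * δ) • vec 1 t + κ 2 t • vec 3 t)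
        = (δ * q) • vec 1 t + κ 2 t • vec 3 t := by
      rw [smul_smul, hδ, one_smul]
      congr 2
      ring
    rw [smul_sub, h5, smul_smul, smul_neg]
    module
  have hκ2 : ∀ t, κ 2 t = Real.sqrt (∑ j, α j t ^ 2) := fun t =>
    eq_sqrt_of_smul_eq (hκ_pos 2 (by norm_num) (by omega) t) hδ
      (hunit 3 (by norm_num) (by norm_num) t) (hξ_orth t) (hE3 t)
  have hκ2pos : ∀ t, 0 < κ 2 t := hκ_pos 2 (by norm_num) (by omega)
  have hfun : ∀ i, (fun u => α i u / Real.sqrt (∑ j, (α j u) ^ 2)) = fun u => α i u / κ 2 u :=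
    fun i => funext fun u => by rw [hκ2]
  have hE3' : vec 3 = fun t => δ • ∑ i, (α i t / κ 2 t) • ξ i t := by
    funext t
    have h : vec 3 t = (κ 2 t)⁻¹ • κ 2 t • vec 3 t := by
      rw [smul_smul, inv_mul_cancel₀ (hκ2pos t).ne', one_smul]
    rw [h, hE3, smul_comm, Finset.smul_sum]
    simp only [smul_smul, div_eq_inv_mul]
  have hmain : ∀ t, κ 3 t • vec 4 t =
      δ • ∑ i, deriv (fun u => α i u / Real.sqrt (∑ j, (α j u) ^ 2)) t • ξ i t := by
    intro t
    simp only [hfun]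
    have hd : HasDerivAt (vec 3) (δ • ∑ i, ((α i t / κ 2 t) • deriv (ξ i) t
        + deriv (fun u => α i u / κ 2 u) t • ξ i t)) t := by
      rw [hE3']
      refine HasDerivAt.const_smul δ (HasDerivAt.fun_sum fun i _ => ?_)
      exact HasDerivAt.smul
        ((hαd i t).fun_div (hκd 2 t) (hκ2pos t).ne').hasDerivAt (hξd i t).hasDerivAt
    have h := hfrenet 3 (by norm_num) (by omega) t
    rw [hd.deriv, Finset.sum_add_distrib] at h
    have hsq : ∑ i, α i t ^ 2 = κ 2 t ^ 2 := by
      rw [hκ2, Real.sq_sqrt (Finset.sum_nonneg fun i _ => sq_nonneg _)]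
    have hs1 : ∑ i, (α i t / κ 2 t) • deriv (ξ i) t = -(κ 2 t * δ) • vec 2 t := by
      have h1 : ∀ i, (α i t / κ 2 t) • deriv (ξ i) t
          = (-(δ * (κ 2 t)⁻¹) * α i t ^ 2) • vec 2 t := by
        intro i
        rw [hξ_deriv, hβ, zero_smul, sub_zero, hE2, smul_smul, smul_smul]
        congr 1
        ring
      simp only [h1]
      rw [← Finset.sum_smul, ← Finset.mul_sum, hsq]
      congr 1
      field_simp [(hκ2pos t).ne']
    rw [hs1, smul_add, smul_smul, show δ * -(κ 2 t * δ) = -κ 2 t by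
      linear_combination (-κ 2 t) * hδ] at h
    exact (add_left_cancel h).symm
  exact ⟨hmain, fun t => eq_sqrt_of_smul_eq (hκ_pos 3 (by norm_num) (by omega) t) hδ
    (hunit 4 (by norm_num) le_rfl t) (hξ_orth t) (hmain t)⟩
end

section
/- Let γ be a Legendre trajectory for strength q ≠ 0 in the model, given as a Frenet curve E₁, E₂, E₃ of osculating order exactly 3, and set δ = sgn(−q). Then there exist real constants c₁,…,c_s with Σ_{i=1}^s c_i² = 1 such that α_i(t) = c_i·√(Σ_{j=1}^s α_j(t)²) for all i and t, the Frenet frame is {T, δ·φT, E₃} with E₂ = δ·φT, and E₃ = δ·Σ_{i=1}^s c_i ξ_i. -/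
/-!
Write `T = E₁` and `δ = sign (-q)`. Since `T ⊥ ξ_i`, the vector `φT` is a unit vector, so comparing
the Lorentz equation `T' = -q φT` with the Frenet equation `T' = κ₁ E₂` gives `κ₁ = |q|` and
`E₂ = δ φT`. Differentiating `⟨T, ξ_i⟩ = 0` gives `β_i = 0`. The structure equation for `Y = T`
then reads `(φT)' = q T + ∑ α_i ξ_i`, and comparison with `E₂' = -κ₁ T + κ₂ E₃` gives
`κ₂ E₃ = δ ∑ α_i ξ_i`; hence `κ₂ = √(∑ α_i²)` and `α_i = δ κ₂ ⟨E₃, ξ_i⟩`.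

The constants are `c_i = δ ⟨E₃, ξ_i⟩`. They do not depend on `t`: osculating order `3` means
`E₃' = -κ₂ E₂`, which is orthogonal to `ξ_i`, while `ξ_i' = -α_i φT` is proportional to `E₂`, which
is orthogonal to `E₃`.
-/


open RealInnerProductSpace

theorem stmt_8
    {E : Type*} [NormedAddCommGroup E] [InnerProductSpace ℝ E]
    (s r : ℕ) (hs : 1 ≤ s) (hr : r = 3)
    (vec : ℕ → ℝ → E) (κ : ℕ → ℝ → ℝ)
    (hvec_smooth : ∀ j, ContDiff ℝ (⊤ : ℕ∞) (vec j))
    (hκ_smooth : ∀ j, ContDiff ℝ (⊤ : ℕ∞) (κ j))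
    (horth : ∀ t : ℝ, ∀ i ∈ Finset.Icc 1 r, ∀ j ∈ Finset.Icc 1 r,
        ⟪vec i t, vec j t⟫ = if i = j then (1 : ℝ) else 0)
    (hκ_pos : ∀ j, 1 ≤ j → j ≤ r - 1 → ∀ t : ℝ, 0 < κ j t)
    (hκ_zero : ∀ j, j = 0 ∨ r ≤ j → κ j = 0)
    (hvec_zero : ∀ j, j = 0 ∨ r < j → vec j = 0)
    (hfrenet : ∀ j, 1 ≤ j → j ≤ r → ∀ t : ℝ,
        deriv (vec j) t = -(κ (j - 1) t) • vec (j - 1) t + κ j t • vec (j + 1) t)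
    (ξ : Fin s → ℝ → E)
    (hξ_smooth : ∀ i, ContDiff ℝ (⊤ : ℕ∞) (ξ i))
    (hξ_orth : ∀ t : ℝ, ∀ i j : Fin s, ⟪ξ i t, ξ j t⟫ = if i = j then (1 : ℝ) else 0)
    (hLeg : ∀ (t : ℝ) (i : Fin s), ⟪vec 1 t, ξ i t⟫ = 0)
    (φ : ℝ → E →L[ℝ] E) (hφ_smooth : ContDiff ℝ (⊤ : ℕ∞) φ)
    (hφ_skew : ∀ (t : ℝ) (x y : E), ⟪φ t x, y⟫ = -⟪x, φ t y⟫)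
    (hφ_ξ : ∀ (t : ℝ) (i : Fin s), φ t (ξ i t) = 0)
    (hφ_sq : ∀ (t : ℝ) (x : E), φ t (φ t x) = -x + ∑ i, ⟪x, ξ i t⟫ • ξ i t)
    (α β : Fin s → ℝ → ℝ)
    (hα_smooth : ∀ i, ContDiff ℝ (⊤ : ℕ∞) (α i)) (hβ_smooth : ∀ i, ContDiff ℝ (⊤ : ℕ∞) (β i))
    (hξ_deriv : ∀ (i : Fin s) (t : ℝ),
        deriv (ξ i) t = -(α i t) • φ t (vec 1 t) - β i t • φ t (φ t (vec 1 t)))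
    (hnablaφ : ∀ Y : ℝ → E, ContDiff ℝ (⊤ : ℕ∞) Y → ∀ t : ℝ,
        deriv (fun u => φ u (Y u)) t - φ t (deriv Y t) =
          ∑ i, (α i t • (⟪φ t (vec 1 t), φ t (Y t)⟫ • ξ i t
                  + ⟪Y t, ξ i t⟫ • φ t (φ t (vec 1 t)))
              + β i t • (⟪φ t (vec 1 t), Y t⟫ • ξ i t - ⟪Y t, ξ i t⟫ • φ t (vec 1 t))))
    (q : ℝ) (hq : q ≠ 0)
    (hLorentz : ∀ t : ℝ, deriv (vec 1) t = -q • φ t (vec 1 t))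
    :
    ∃ c : Fin s → ℝ, (∑ i, c i ^ 2 = 1) ∧
      (∀ (i : Fin s) (t : ℝ), α i t = c i * Real.sqrt (∑ j, (α j t) ^ 2)) ∧
      (∀ t : ℝ, vec 2 t = Real.sign (-q) • φ t (vec 1 t)) ∧
      (∀ t : ℝ, vec 3 t = Real.sign (-q) • ∑ i, c i • ξ i t) := by
  subst hr
  have hdiff : ∀ j, Differentiable ℝ (vec j) := fun j => (hvec_smooth j).differentiable (by simp)
  have hξdiff : ∀ i, Differentiable ℝ (ξ i) := fun i => (hξ_smooth i).differentiable (by simp)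
  have hTT : ∀ t, ⟪vec 1 t, vec 1 t⟫ = (1 : ℝ) := fun t => by
    simpa using horth t 1 (by simp) 1 (by simp)
  have h22 : ∀ t, ⟪vec 2 t, vec 2 t⟫ = (1 : ℝ) := fun t => by
    simpa using horth t 2 (by simp) 2 (by simp)
  have h33 : ∀ t, ⟪vec 3 t, vec 3 t⟫ = (1 : ℝ) := fun t => by
    simpa using horth t 3 (by simp) 3 (by simp)
  have h32 : ∀ t, ⟪vec 3 t, vec 2 t⟫ = (0 : ℝ) := fun t => by
    simpa using horth t 3 (by simp) 2 (by simp)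
  have hκ1 : ∀ t, 0 < κ 1 t := hκ_pos 1 (by norm_num) (by norm_num)
  have hκ2 : ∀ t, 0 < κ 2 t := hκ_pos 2 (by norm_num) (by norm_num)
  have hφφT : ∀ t, φ t (φ t (vec 1 t)) = -vec 1 t := fun t => by
    simp [hφ_sq, hLeg]
  have hφTφT : ∀ t, ⟪φ t (vec 1 t), φ t (vec 1 t)⟫ = (1 : ℝ) := fun t => by
    rw [hφ_skew, hφφT, inner_neg_right, neg_neg, hTT]
  have hφTξ : ∀ t i, ⟪φ t (vec 1 t), ξ i t⟫ = (0 : ℝ) := fun t i => by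
    rw [hφ_skew, hφ_ξ, inner_zero_right, neg_zero]
  have hTφT : ∀ t, ⟪vec 1 t, φ t (vec 1 t)⟫ = (0 : ℝ) := fun t => by
    have h := hφ_skew t (vec 1 t) (vec 1 t)
    rw [real_inner_comm] at h
    linarith
  have hκE2 : ∀ t, κ 1 t • vec 2 t = -q • φ t (vec 1 t) := fun t => by
    have h := hfrenet 1 (by norm_num) (by norm_num) t
    rw [hLorentz t] at h
    simpa [hκ_zero 0 (Or.inl rfl)] using h.symm
  have hκ1q : ∀ t, κ 1 t = |q| := fun t => by
    have h : ⟪κ 1 t • vec 2 t, κ 1 t • vec 2 t⟫ = (⟪-q • φ t (vec 1 t), -q • φ t (vec 1 t)⟫ : ℝ) := by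
      rw [hκE2 t]
    simp only [real_inner_smul_left, real_inner_smul_right, h22, hφTφT] at h
    rw [← abs_of_pos (hκ1 t)]
    exact (sq_eq_sq_iff_abs_eq_abs _ _).1 (by linarith)
  obtain ⟨δ, hδ⟩ : ∃ δ, δ = Real.sign (-q) := ⟨_, rfl⟩
  have hδq : -q = δ * |q| ∧ δ * δ = 1 := by
    rcases lt_or_gt_of_ne hq with h | h
    · rw [hδ, Real.sign_of_pos (by linarith), abs_of_neg h]; simp
    · rw [hδ, Real.sign_of_neg (by linarith), abs_of_pos h]; simp
  obtain ⟨hq', hδδ⟩ := hδq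
  have hE2 : ∀ t, vec 2 t = δ • φ t (vec 1 t) := fun t => by
    have h := hκE2 t
    rw [hκ1q, hq', mul_comm, mul_smul] at h
    exact smul_right_injective E (abs_ne_zero.2 hq) h
  -- Differentiate the Legendre condition `⟪vec 1 t, ξ i t⟫ = 0`.
  have hβ : ∀ i t, β i t = 0 := fun i t => by
    have h := deriv_inner_apply ℝ (hdiff 1 t) (hξdiff i t)
    simp only [hLeg, deriv_const, hLorentz, hξ_deriv, hφφT, inner_sub_right, real_inner_smul_right,
      real_inner_smul_left, hTφT, hφTξ, inner_neg_right, hTT] at h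
    linarith
  have hφT' : ∀ t, deriv (fun u => φ u (vec 1 u)) t = q • vec 1 t + ∑ i, α i t • ξ i t := fun t => by
    have h := hnablaφ (vec 1) (hvec_smooth 1) t
    simp only [hβ, hLeg, hφTφT, hLorentz, map_smul, hφφT, one_smul, zero_smul, add_zero] at h
    rw [sub_eq_iff_eq_add'] at h
    rw [h]
    simp
  have hE3 : ∀ t, κ 2 t • vec 3 t = δ • ∑ i, α i t • ξ i t := fun t => by
    have h := hfrenet 2 (by norm_num) (by norm_num) t
    have hd : deriv (vec 2) t = δ • (q • vec 1 t + ∑ i, α i t • ξ i t) := by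
      rw [← hφT' t, show vec 2 = fun u => δ • φ u (vec 1 u) from funext hE2]
      have hφd : Differentiable ℝ φ := hφ_smooth.differentiable (by simp)
      exact deriv_fun_const_smul δ ((hφd t).clm_apply (hdiff 1 t))
    have hδq' : δ * q = -|q| := by
      linear_combination (-δ) * hq' - |q| * hδδ
    rw [hd, smul_add, smul_smul, hδq', show 2 - 1 = 1 from rfl, hκ1q] at h
    exact (add_left_cancel h).symm
  have hα : ∀ i t, κ 2 t * ⟪vec 3 t, ξ i t⟫ = δ * α i t := fun i t => by
    rw [← real_inner_smul_left, hE3, real_inner_smul_left, sum_inner]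
    simp [real_inner_smul_left, hξ_orth]
  have hconst : ∀ i t, (⟪vec 3 t, ξ i t⟫ : ℝ) = ⟪vec 3 0, ξ i 0⟫ := fun i t => by
    refine is_const_of_deriv_eq_zero (f := fun t => (⟪vec 3 t, ξ i t⟫ : ℝ))
      ((hdiff 3).inner ℝ (hξdiff i)) (fun u => ?_) t 0
    have h2ξ : (⟪vec 2 u, ξ i u⟫ : ℝ) = 0 := by
      rw [hE2, real_inner_smul_left, hφTξ, mul_zero]
    have h3φ : (⟪vec 3 u, φ u (vec 1 u)⟫ : ℝ) = 0 := by
      have h := h32 u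
      rw [hE2, real_inner_smul_right] at h
      exact (mul_eq_zero.1 h).resolve_left (fun h0 => by simp [h0] at hδδ)
    rw [deriv_inner_apply ℝ (hdiff 3 u) (hξdiff i u), hξ_deriv,
      hfrenet 3 (by norm_num) (by norm_num) u, hκ_zero 3 (Or.inr le_rfl), hβ]
    simp [real_inner_smul_left, real_inner_smul_right, h2ξ, h3φ]
  obtain ⟨c, hc⟩ : ∃ c : Fin s → ℝ, ∀ i, c i = δ * ⟪vec 3 0, ξ i 0⟫ := ⟨_, fun _ => rfl⟩
  have hακ : ∀ i t, α i t = c i * κ 2 t := fun i t => by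
    have h := hα i t
    rw [hconst] at h
    rw [hc]
    linear_combination (-α i t) * hδδ - δ * h
  have hE3c : ∀ t, vec 3 t = δ • ∑ i, c i • ξ i t := fun t => by
    refine smul_right_injective E (hκ2 t).ne' ?_
    simp only [hE3, hακ, Finset.smul_sum, smul_smul]
    exact Finset.sum_congr rfl fun i _ => by congr 1; ring
  have hcsum : ∑ i, c i ^ 2 = 1 := by
    have h := h33 0
    nth_rewrite 2 [hE3c] at h
    rw [real_inner_smul_right, inner_sum, Finset.mul_sum] at h
    rw [← h]
    refine Finset.sum_congr rfl fun i _ => ?_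
    rw [real_inner_smul_right, sq]
    nth_rewrite 2 [hc]
    ring
  refine ⟨c, hcsum, fun i t => ?_, fun t => hδ ▸ hE2 t, fun t => hδ ▸ hE3c t⟩
  have hsum : ∑ j, α j t ^ 2 = κ 2 t ^ 2 := by
    simp only [hακ, mul_pow, ← Finset.sum_mul, hcsum, one_mul]
  rw [hsum, Real.sqrt_sq (hκ2 t).le, hακ]
end

section
/- There does not exist a C-parallel Legendre curve in the tangent bundle: for every Legendre Frenet curve in the model (of any osculating order r ≥ 1, with mean curvature vector field H = κ₁E₂ when r ≥ 2 and H = 0 when r = 1) and every differentiable nowhere-vanishing function λ : ℝ → ℝ, the equation H′ = λ·Σ_{i=1}^s ξ_i fails at some parameter t. -/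
/-!
Write `T = vec 1` and `H = κ₁ E₂`. The first Frenet equation gives `T' = H`, and `|T| = 1` gives
`⟪T, H⟫ = 0`. Differentiating the latter yields `|H|² + ⟪T, H'⟫ = 0`. If `H' = lam • ∑ ξ i` held
everywhere, the Legendre condition would make the second term vanish, so `H = 0` identically and
`lam • ∑ ξ i = H' = 0`; pairing with one of the orthonormal `ξ i` contradicts `lam ≠ 0`.
-/

open RealInnerProductSpace

theorem stmt_9
    {E : Type*} [NormedAddCommGroup E] [InnerProductSpace ℝ E]
    (s r : ℕ) (hs : 1 ≤ s) (hr : 1 ≤ r)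
    (vec : ℕ → ℝ → E) (κ : ℕ → ℝ → ℝ)
    (hvec_smooth : ∀ j, ContDiff ℝ (⊤ : ℕ∞) (vec j))
    (hκ_smooth : ∀ j, ContDiff ℝ (⊤ : ℕ∞) (κ j))
    (horth : ∀ t : ℝ, ∀ i ∈ Finset.Icc 1 r, ∀ j ∈ Finset.Icc 1 r,
        ⟪vec i t, vec j t⟫ = if i = j then (1 : ℝ) else 0)
    (hκ_pos : ∀ j, 1 ≤ j → j ≤ r - 1 → ∀ t : ℝ, 0 < κ j t)
    (hκ_zero : ∀ j, j = 0 ∨ r ≤ j → κ j = 0)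
    (hvec_zero : ∀ j, j = 0 ∨ r < j → vec j = 0)
    (hfrenet : ∀ j, 1 ≤ j → j ≤ r → ∀ t : ℝ,
        deriv (vec j) t = -(κ (j - 1) t) • vec (j - 1) t + κ j t • vec (j + 1) t)
    (ξ : Fin s → ℝ → E)
    (hξ_smooth : ∀ i, ContDiff ℝ (⊤ : ℕ∞) (ξ i))
    (hξ_orth : ∀ t : ℝ, ∀ i j : Fin s, ⟪ξ i t, ξ j t⟫ = if i = j then (1 : ℝ) else 0)
    (hLeg : ∀ (t : ℝ) (i : Fin s), ⟪vec 1 t, ξ i t⟫ = 0)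
    (lam : ℝ → ℝ) (hlam : Differentiable ℝ lam) (hlam_ne : ∀ t : ℝ, lam t ≠ 0)
    :
    ∃ t : ℝ, deriv (fun u => κ 1 u • vec 2 u) t ≠ lam t • ∑ i, ξ i t := by
  by_contra! hcon
  have hTd : Differentiable ℝ (vec 1) := (hvec_smooth 1).differentiable (by simp)
  have hT : ∀ t, HasDerivAt (vec 1) (κ 1 t • vec 2 t) t := by
    intro t
    have h := hfrenet 1 le_rfl hr t
    simp only [Nat.sub_self, hκ_zero 0 (Or.inl rfl), Pi.zero_apply, neg_zero, zero_smul,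
      zero_add] at h
    exact h ▸ (hTd t).hasDerivAt
  have hH : ∀ t, HasDerivAt (fun u => κ 1 u • vec 2 u) (lam t • ∑ i, ξ i t) t := by
    intro t
    have hd : DifferentiableAt ℝ (fun u => κ 1 u • vec 2 u) t :=
      ((hκ_smooth 1).differentiable (by simp) t).smul ((hvec_smooth 2).differentiable (by simp) t)
    exact hcon t ▸ hd.hasDerivAt
  have hTT : ∀ t, ⟪vec 1 t, vec 1 t⟫ = (1 : ℝ) := by
    intro t
    simpa using horth t 1 (by simp [hr]) 1 (by simp [hr])
  have hTH : ∀ t, ⟪vec 1 t, κ 1 t • vec 2 t⟫ = (0 : ℝ) := by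
    intro t
    have h := (hT t).inner ℝ (hT t)
    simp only [hTT] at h
    have h0 := h.unique (hasDerivAt_const t (1 : ℝ))
    rw [real_inner_comm (vec 1 t) (κ 1 t • vec 2 t)] at h0
    linarith
  have hH0 : ∀ t, κ 1 t • vec 2 t = 0 := by
    intro t
    have h := (hT t).inner ℝ (hH t)
    simp only [hTH] at h
    have h0 := h.unique (hasDerivAt_const t (0 : ℝ))
    have hL : ⟪vec 1 t, lam t • ∑ i, ξ i t⟫ = (0 : ℝ) := by
      simp [inner_smul_right, inner_sum, hLeg]
    rw [hL, zero_add] at h0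
    exact inner_self_eq_zero.mp h0
  have h := hH 0
  simp only [hH0] at h
  have h0 := h.unique (hasDerivAt_const (0 : ℝ) (0 : E))
  have h1 : ⟪ξ ⟨0, hs⟩ 0, lam 0 • ∑ i, ξ i 0⟫ = lam 0 := by
    simp [inner_smul_right, inner_sum, hξ_orth]
  rw [h0, inner_zero_right] at h1
  exact hlam_ne 0 h1.symm
end

section
/- Let γ be a Legendre Frenet curve of osculating order exactly 2 in the model, satisfying the trans-S structure equations along the curve with structure functions α_i, β_i and unit field fT, and let λ : ℝ → ℝ be a differentiable nowhere-vanishing function. Then γ is C-parallel in the normal bundle with function λ (i.e. H′ − ⟨H′, T⟩T = λ·Σ_{i=1}^s ξ_i pointwise, where H = κ₁E₂) if and only if there exist ε ∈ {−1, 1} and a smooth function β : ℝ → ℝ such that β_i = β for all i = 1,…,s, κ₁ = −ε√s·β, λ = −β′, and Σ_{i=1}^s ξ_i = ε√s·E₂. -/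
/-! For `r = 2` the Frenet equations give `H' = κ₁' E₂ - κ₁² T`, so the curve is C-parallel iff
`κ₁' E₂ = lam • S` with `S = ∑ ξ_i`.

If this holds then `S = g E₂` with `g = ⟪S, E₂⟫` continuous and `g² = ‖S‖² = s`; by connectedness
of `ℝ`, `g = ε √s` for a constant sign `ε`. Hence `⟪E₂, ξ_i⟫ = ε / √s`, and differentiating the
Legendre condition `⟪T, ξ_i⟫ = 0` gives `β_i = -κ₁ ⟪E₂, ξ_i⟫ = -ε κ₁ / √s`, independent of `i`.
Comparing coefficients of `E₂` in the C-parallel equation yields `lam = -β'`. The converse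
is substitution. -/

open RealInnerProductSpace

theorem stmt_10
    {E : Type*} [NormedAddCommGroup E] [InnerProductSpace ℝ E]
    (s r : ℕ) (hs : 1 ≤ s) (hr : r = 2)
    (vec : ℕ → ℝ → E) (κ : ℕ → ℝ → ℝ)
    (hvec_smooth : ∀ j, ContDiff ℝ (⊤ : ℕ∞) (vec j))
    (hκ_smooth : ∀ j, ContDiff ℝ (⊤ : ℕ∞) (κ j))
    (horth : ∀ t : ℝ, ∀ i ∈ Finset.Icc 1 r, ∀ j ∈ Finset.Icc 1 r,
        ⟪vec i t, vec j t⟫ = if i = j then (1 : ℝ) else 0)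
    (hκ_pos : ∀ j, 1 ≤ j → j ≤ r - 1 → ∀ t : ℝ, 0 < κ j t)
    (hκ_zero : ∀ j, j = 0 ∨ r ≤ j → κ j = 0)
    (hvec_zero : ∀ j, j = 0 ∨ r < j → vec j = 0)
    (hfrenet : ∀ j, 1 ≤ j → j ≤ r → ∀ t : ℝ,
        deriv (vec j) t = -(κ (j - 1) t) • vec (j - 1) t + κ j t • vec (j + 1) t)
    (ξ : Fin s → ℝ → E)
    (hξ_smooth : ∀ i, ContDiff ℝ (⊤ : ℕ∞) (ξ i))
    (hξ_orth : ∀ t : ℝ, ∀ i j : Fin s, ⟪ξ i t, ξ j t⟫ = if i = j then (1 : ℝ) else 0)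
    (hLeg : ∀ (t : ℝ) (i : Fin s), ⟪vec 1 t, ξ i t⟫ = 0)
    (α β : Fin s → ℝ → ℝ)
    (hα_smooth : ∀ i, ContDiff ℝ (⊤ : ℕ∞) (α i)) (hβ_smooth : ∀ i, ContDiff ℝ (⊤ : ℕ∞) (β i))
    (fT : ℝ → E) (hfT_smooth : ContDiff ℝ (⊤ : ℕ∞) fT)
    (hfT_norm : ∀ t : ℝ, ‖fT t‖ = 1)
    (hfT_T : ∀ t : ℝ, ⟪fT t, vec 1 t⟫ = 0)
    (hfT_ξ : ∀ (t : ℝ) (i : Fin s), ⟪fT t, ξ i t⟫ = 0)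
    (hξ_deriv : ∀ (i : Fin s) (t : ℝ), deriv (ξ i) t = -(α i t) • fT t + β i t • vec 1 t)
    (lam : ℝ → ℝ) (hlam : Differentiable ℝ lam) (hlam_ne : ∀ t : ℝ, lam t ≠ 0)
    :
    (∀ t : ℝ, deriv (fun u => κ 1 u • vec 2 u) t
        - ⟪deriv (fun u => κ 1 u • vec 2 u) t, vec 1 t⟫ • vec 1 t = lam t • ∑ i, ξ i t) ↔
      ∃ ε : ℝ, (ε = 1 ∨ ε = -1) ∧ ∃ b : ℝ → ℝ, ContDiff ℝ (⊤ : ℕ∞) b ∧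
        (∀ i : Fin s, β i = b) ∧
        (∀ t : ℝ, κ 1 t = -ε * Real.sqrt s * b t) ∧
        (∀ t : ℝ, lam t = -deriv b t) ∧
        (∀ t : ℝ, ∑ i, ξ i t = (ε * Real.sqrt s) • vec 2 t) := by
  subst hr
  have hE11 (t : ℝ) : ⟪vec 1 t, vec 1 t⟫ = (1 : ℝ) := by
    simpa using horth t 1 (by simp) 1 (by simp)
  have hE22 (t : ℝ) : ⟪vec 2 t, vec 2 t⟫ = (1 : ℝ) := by
    simpa using horth t 2 (by simp) 2 (by simp)
  have hE21 (t : ℝ) : ⟪vec 2 t, vec 1 t⟫ = (0 : ℝ) := by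
    simpa using horth t 2 (by simp) 1 (by simp)
  have hvd (j : ℕ) (t : ℝ) : DifferentiableAt ℝ (vec j) t :=
    (hvec_smooth j).differentiable (by simp) t
  have hκd (t : ℝ) : DifferentiableAt ℝ (κ 1) t := (hκ_smooth 1).differentiable (by simp) t
  have hξd (i : Fin s) (t : ℝ) : DifferentiableAt ℝ (ξ i) t :=
    (hξ_smooth i).differentiable (by simp) t
  have hd1 (t : ℝ) : deriv (vec 1) t = κ 1 t • vec 2 t := by
    simpa [hκ_zero 0 (Or.inl rfl)] using hfrenet 1 le_rfl (by norm_num) t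
  have hd2 (t : ℝ) : deriv (vec 2) t = -(κ 1 t) • vec 1 t := by
    simpa [hκ_zero 2 (Or.inr le_rfl)] using hfrenet 2 (by norm_num) le_rfl t
  have hH (t : ℝ) : deriv (fun u => κ 1 u • vec 2 u) t
      = κ 1 t • (-(κ 1 t) • vec 1 t) + deriv (κ 1) t • vec 2 t := by
    rw [deriv_fun_smul (hκd t) (hvd 2 t), hd2]
  have hN (t : ℝ) : deriv (fun u => κ 1 u • vec 2 u) t
      - ⟪deriv (fun u => κ 1 u • vec 2 u) t, vec 1 t⟫ • vec 1 t = deriv (κ 1) t • vec 2 t := by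
    rw [hH]
    simp only [inner_add_left, real_inner_smul_left, hE11, hE21]
    module
  have hs0 : (0 : ℝ) < s := by exact_mod_cast hs
  have hq0 : 0 < Real.sqrt s := Real.sqrt_pos.2 hs0
  have hqq : Real.sqrt s * Real.sqrt s = s := Real.mul_self_sqrt hs0.le
  have hSξ (t : ℝ) (i : Fin s) : ⟪∑ j, ξ j t, ξ i t⟫ = (1 : ℝ) := by
    simp [sum_inner, hξ_orth]
  have hSS (t : ℝ) : ⟪∑ j, ξ j t, ∑ j, ξ j t⟫ = (s : ℝ) := by
    rw [inner_sum]; simp [hSξ]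
  -- the derivative of the Legendre condition `⟪T, ξ_i⟫ = 0`
  have hβ (t : ℝ) (i : Fin s) : β i t = -(κ 1 t * ⟪vec 2 t, ξ i t⟫) := by
    have h := deriv_inner_apply (𝕜 := ℝ) (hvd 1 t) (hξd i t)
    rw [funext fun t => hLeg t i, deriv_const, hξ_deriv, hd1, inner_add_right,
      real_inner_smul_right, real_inner_smul_right, real_inner_smul_left,
      real_inner_comm, hfT_T, hE11] at h
    linarith
  simp only [hN]
  constructor
  · intro h
    have hg (t : ℝ) : ∑ i, ξ i t = ⟪∑ i, ξ i t, vec 2 t⟫ • vec 2 t := by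
      have h1 : ∑ i, ξ i t = ((lam t)⁻¹ * deriv (κ 1) t) • vec 2 t := by
        rw [mul_smul, h, smul_smul, inv_mul_cancel₀ (hlam_ne t), one_smul]
      have h2 : ⟪∑ i, ξ i t, vec 2 t⟫ = (lam t)⁻¹ * deriv (κ 1) t := by
        rw [h1, real_inner_smul_left, hE22, mul_one]
      rw [h2, h1]
    have hg2 (t : ℝ) : ⟪∑ i, ξ i t, vec 2 t⟫ ^ 2 = (s : ℝ) := by
      have h1 := hSS t
      rw [hg t, real_inner_smul_left, real_inner_smul_right, hE22] at h1
      linarith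
    have hgc : Continuous fun t => ⟪∑ i, ξ i t, vec 2 t⟫ :=
      (continuous_finsetSum _ fun i _ => (hξ_smooth i).continuous).inner
        (hvec_smooth 2).continuous
    obtain ⟨ε, hε, hS⟩ : ∃ ε : ℝ, (ε = 1 ∨ ε = -1) ∧
        ∀ t, ∑ i, ξ i t = (ε * Real.sqrt s) • vec 2 t := by
      have hsgn := isPreconnected_univ.eq_or_eq_neg_of_sq_eq (f := fun t => ⟪∑ i, ξ i t, vec 2 t⟫)
        (g := fun _ => Real.sqrt s) hgc.continuousOn continuousOn_const
        (fun t _ => by simp [hg2]) (fun {_} _ => hq0.ne')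
      rcases hsgn with h1 | h1
      · refine ⟨1, Or.inl rfl, fun t => ?_⟩
        rw [hg t]; congr 1; simpa using h1 (Set.mem_univ t)
      · refine ⟨-1, Or.inr rfl, fun t => ?_⟩
        rw [hg t]; congr 1; simpa using h1 (Set.mem_univ t)
    have hεε : ε * ε = 1 := by rcases hε with rfl | rfl <;> norm_num
    have hb (t : ℝ) (i : Fin s) : β i t = -ε / Real.sqrt s * κ 1 t := by
      have h1 := hSξ t i
      rw [hS, real_inner_smul_left] at h1
      have h2 : ⟪vec 2 t, ξ i t⟫ = ε / Real.sqrt s := by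
        rw [eq_div_iff hq0.ne']
        linear_combination ε * h1 - Real.sqrt s * ⟪vec 2 t, ξ i t⟫ * hεε
      rw [hβ, h2]; ring
    refine ⟨ε, hε, fun t => -ε / Real.sqrt s * κ 1 t, contDiff_const.mul (hκ_smooth 1),
      fun i => funext fun t => hb t i, fun t => ?_, fun t => ?_, hS⟩
    · field_simp
      linear_combination -(κ 1 t) * hεε
    · rw [deriv_const_mul _ (hκd t)]
      have h1 := congrArg (fun v => ⟪v, vec 2 t⟫) (h t)
      simp only [hS, real_inner_smul_left, hE22] at h1
      rw [mul_one, mul_one] at h1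
      rw [h1]
      field_simp
      linear_combination -(lam t) * hεε
  · rintro ⟨ε, -, b, hbs, -, hκb, hl, hS⟩ t
    have h1 : deriv (κ 1) t = -ε * Real.sqrt s * deriv b t := by
      rw [funext hκb, deriv_const_mul _ (hbs.differentiable (by simp) t)]
    rw [h1, hS, hl, smul_smul]
    congr 1
    ring
end

section
/- Let γ be a Legendre Frenet curve of osculating order exactly 2 in the model, satisfying the trans-S structure equations along the curve with structure functions α_i, β_i and unit field fT, and let λ : ℝ → ℝ be a differentiable nowhere-vanishing function. Then γ is C-proper in the tangent bundle with function λ (i.e. −H″ = λ·Σ_{i=1}^s ξ_i pointwise, where H = κ₁E₂) if and only if γ is a circle with the following data: there exist ε ∈ {−1, 1} and a real constant β such that β_i = β for all i = 1,…,s, κ₁ is the positive constant −ε√s·β, E₂ = ε·(1/√s)·Σ_{i=1}^s ξ_i, λ is the constant −s·β³, and Σ_{i=1}^s α_i(t) = 0 for all t. -/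
/-!
Write `T`, `N` for the Frenet frame, `κ` for the curvature and `V` for the sum of the characteristic
fields. The Frenet equations give `H'' = (κ'' - κ³) N - 3 κ κ' T`
(`second_deriv_mean_curvature`). Since `V ⊥ T`, the equation `-H'' = λ V` forces `κ κ' = 0`, so `κ`
is a positive constant `k` and `k³ N = λ V`. Taking norms gives `k⁶ = s λ²`; hence `λ²` is constant,
and a differentiable nowhere-vanishing function with constant square is constant. Differentiating
`⟨T, ξ i⟩ = 0` gives `β i = -k ⟨N, ξ i⟩ = -λ / k²`, which is therefore the same constant `b` for all
`i`, and `k² = s b²`, so `k = -ε √s b` with `ε` the opposite of the sign of `b`. Finally, the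
`fT`-component of the derivative of `k³ N = λ V` is `λ ∑ i, α i = 0`. Conversely, constant curvature
gives `-H'' = k³ N`, and substituting the data yields `λ V`.
-/

open RealInnerProductSpace

/-- In a Frenet frame of order two, `H'' = (κ'' - κ³) N - 3 κ κ' T` for `H = κ N`. -/
lemma second_deriv_mean_curvature
    {E : Type*} [NormedAddCommGroup E] [InnerProductSpace ℝ E]
    (T N : ℝ → E) (k k' k'' : ℝ → ℝ)
    (hT : ∀ t, HasDerivAt T (k t • N t) t) (hN : ∀ t, HasDerivAt N (-(k t) • T t) t)
    (hk : ∀ t, HasDerivAt k (k' t) t) (hk' : ∀ t, HasDerivAt k' (k'' t) t) (t : ℝ) :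
    deriv (deriv (fun u => k u • N u)) t =
      (k'' t - k t ^ 3) • N t - (3 * k t * k' t) • T t := by
  have h1 : deriv (fun u => k u • N u) = fun u => k' u • N u - (k u ^ 2) • T u := by
    funext u
    rw [((hk u).fun_smul (hN u)).deriv]
    module
  rw [h1, (((hk' t).fun_smul (hN t)).fun_sub (((hk t).fun_pow 2).fun_smul (hT t))).deriv]
  norm_num
  module

/-- A differentiable nowhere-vanishing function with constant square is constant. -/
lemma eq_of_sq_eq_const (f : ℝ → ℝ) (hf : Differentiable ℝ f) (hne : ∀ t, f t ≠ 0) (c : ℝ)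
    (h : ∀ t, f t ^ 2 = c) (x y : ℝ) : f x = f y := by
  refine is_const_of_deriv_eq_zero hf (fun t => ?_) x y
  have h1 := ((hf t).hasDerivAt.pow 2).deriv
  have h2 : f ^ 2 = fun _ => c := funext h
  rw [h2, deriv_const] at h1
  simpa [hne t] using h1.symm


theorem stmt_12
    {E : Type*} [NormedAddCommGroup E] [InnerProductSpace ℝ E]
    (s r : ℕ) (hs : 1 ≤ s) (hr : r = 2)
    (vec : ℕ → ℝ → E) (κ : ℕ → ℝ → ℝ)
    (hvec_smooth : ∀ j, ContDiff ℝ (⊤ : ℕ∞) (vec j))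
    (hκ_smooth : ∀ j, ContDiff ℝ (⊤ : ℕ∞) (κ j))
    (horth : ∀ t : ℝ, ∀ i ∈ Finset.Icc 1 r, ∀ j ∈ Finset.Icc 1 r,
        ⟪vec i t, vec j t⟫ = if i = j then (1 : ℝ) else 0)
    (hκ_pos : ∀ j, 1 ≤ j → j ≤ r - 1 → ∀ t : ℝ, 0 < κ j t)
    (hκ_zero : ∀ j, j = 0 ∨ r ≤ j → κ j = 0)
    (hvec_zero : ∀ j, j = 0 ∨ r < j → vec j = 0)
    (hfrenet : ∀ j, 1 ≤ j → j ≤ r → ∀ t : ℝ,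
        deriv (vec j) t = -(κ (j - 1) t) • vec (j - 1) t + κ j t • vec (j + 1) t)
    (ξ : Fin s → ℝ → E)
    (hξ_smooth : ∀ i, ContDiff ℝ (⊤ : ℕ∞) (ξ i))
    (hξ_orth : ∀ t : ℝ, ∀ i j : Fin s, ⟪ξ i t, ξ j t⟫ = if i = j then (1 : ℝ) else 0)
    (hLeg : ∀ (t : ℝ) (i : Fin s), ⟪vec 1 t, ξ i t⟫ = 0)
    (α β : Fin s → ℝ → ℝ)
    (hα_smooth : ∀ i, ContDiff ℝ (⊤ : ℕ∞) (α i)) (hβ_smooth : ∀ i, ContDiff ℝ (⊤ : ℕ∞) (β i))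
    (fT : ℝ → E) (hfT_smooth : ContDiff ℝ (⊤ : ℕ∞) fT)
    (hfT_norm : ∀ t : ℝ, ‖fT t‖ = 1)
    (hfT_T : ∀ t : ℝ, ⟪fT t, vec 1 t⟫ = 0)
    (hfT_ξ : ∀ (t : ℝ) (i : Fin s), ⟪fT t, ξ i t⟫ = 0)
    (hξ_deriv : ∀ (i : Fin s) (t : ℝ), deriv (ξ i) t = -(α i t) • fT t + β i t • vec 1 t)
    (lam : ℝ → ℝ) (hlam : Differentiable ℝ lam) (hlam_ne : ∀ t : ℝ, lam t ≠ 0)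
    :
    (∀ t : ℝ, -deriv (deriv (fun u => κ 1 u • vec 2 u)) t = lam t • ∑ i, ξ i t) ↔
      ∃ ε : ℝ, (ε = 1 ∨ ε = -1) ∧ ∃ b : ℝ,
        (∀ (i : Fin s) (t : ℝ), β i t = b) ∧
        (0 < -ε * Real.sqrt s * b) ∧
        (∀ t : ℝ, κ 1 t = -ε * Real.sqrt s * b) ∧
        (∀ t : ℝ, vec 2 t = (ε / Real.sqrt s) • ∑ i, ξ i t) ∧
        (∀ t : ℝ, lam t = -((s : ℝ) * b ^ 3)) ∧
        (∀ t : ℝ, ∑ i, α i t = 0) := by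
  subst hr
  have hs0 : (0 : ℝ) < s := by exact_mod_cast hs
  have hsq : Real.sqrt s ^ 2 = s := Real.sq_sqrt hs0.le
  have hsp : 0 < Real.sqrt s := Real.sqrt_pos.2 hs0
  have hT : ∀ t, HasDerivAt (vec 1) (κ 1 t • vec 2 t) t := fun t => by
    have h := ((hvec_smooth 1).differentiable (by simp) t).hasDerivAt
    rw [hfrenet 1 le_rfl (by norm_num) t] at h
    simpa [hκ_zero 0 (Or.inl rfl)] using h
  have hN : ∀ t, HasDerivAt (vec 2) (-(κ 1 t) • vec 1 t) t := fun t => by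
    have h := ((hvec_smooth 2).differentiable (by simp) t).hasDerivAt
    rw [hfrenet 2 (by norm_num) le_rfl t] at h
    simpa [hκ_zero 2 (Or.inr le_rfl)] using h
  have hξ' : ∀ i t, HasDerivAt (ξ i) (-(α i t) • fT t + β i t • vec 1 t) t := fun i t => by
    have h := ((hξ_smooth i).differentiable (by simp) t).hasDerivAt
    rwa [hξ_deriv i t] at h
  have hTT : ∀ t, ⟪vec 1 t, vec 1 t⟫ = 1 := fun t => by
    simpa using horth t 1 (by simp) 1 (by simp)
  have hNN : ∀ t, ⟪vec 2 t, vec 2 t⟫ = 1 := fun t => by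
    simpa using horth t 2 (by simp) 2 (by simp)
  have hTN : ∀ t, ⟪vec 1 t, vec 2 t⟫ = 0 := fun t => by
    simpa using horth t 1 (by simp) 2 (by simp)
  have hkpos : ∀ t, 0 < κ 1 t := hκ_pos 1 le_rfl (by norm_num)
  have hk : ∀ t, HasDerivAt (κ 1) (deriv (κ 1) t) t := fun t =>
    ((hκ_smooth 1).differentiable (by simp) t).hasDerivAt
  have hk' : ∀ t, HasDerivAt (deriv (κ 1)) (deriv (deriv (κ 1)) t) t := fun t =>
    (((contDiff_infty_iff_deriv.1 (hκ_smooth 1)).2).differentiable (by simp) t).hasDerivAt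
  have hH := second_deriv_mean_curvature (vec 1) (vec 2) (κ 1) _ _ hT hN hk hk'
  have hVξ : ∀ t i, ⟪∑ j, ξ j t, ξ i t⟫ = 1 := fun t i => by
    simp [sum_inner, hξ_orth]
  have hVV : ∀ t, ⟪∑ j, ξ j t, ∑ j, ξ j t⟫ = s := fun t => by
    rw [inner_sum]
    simp [hVξ]
  constructor
  · intro h
    have hkd : ∀ t, deriv (κ 1) t = 0 := fun t => by
      have h1 := congrArg (fun v => ⟪vec 1 t, v⟫) (h t)
      simp only [hH, inner_neg_right, inner_sub_right, inner_smul_right, inner_sum, hTN, hTT,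
        hLeg] at h1
      have := (hkpos t).ne'
      simpa [this] using h1
    have hkd2 : ∀ t, deriv (deriv (κ 1)) t = 0 := fun t => by
      rw [show deriv (κ 1) = fun _ => 0 from funext hkd]
      simp
    have hkc : ∀ t, κ 1 t = κ 1 0 := fun t =>
      is_const_of_deriv_eq_zero ((hκ_smooth 1).differentiable (by simp)) hkd t 0
    obtain ⟨k, hkk⟩ : ∃ k, κ 1 0 = k := ⟨_, rfl⟩
    rw [hkk] at hkc
    have hk0 : 0 < k := hkk ▸ hkpos 0
    have hNV : ∀ t, k ^ 3 • vec 2 t = lam t • ∑ i, ξ i t := fun t => by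
      rw [← h t, hH, hkd, hkd2, hkc]
      module
    have hnorm : ∀ t, lam t ^ 2 = k ^ 6 / s := fun t => by
      have h1 := congrArg (fun v => ⟪v, v⟫) (hNV t)
      simp only [inner_smul_left, inner_smul_right, hNN, hVV, conj_trivial] at h1
      field_simp
      linarith
    have hlc : ∀ t, lam t = lam 0 := fun t => eq_of_sq_eq_const lam hlam hlam_ne _ hnorm t 0
    obtain ⟨l, hl⟩ : ∃ l, lam 0 = l := ⟨_, rfl⟩
    rw [hl] at hlc
    have hl0 : l ≠ 0 := hl ▸ hlam_ne 0
    have hls : l ^ 2 * s = k ^ 6 := by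
      have := hnorm 0
      rw [hl] at this
      rw [this]
      field_simp
    simp only [hlc] at hNV ⊢
    -- The derivative of `⟨T, ξ i⟩ = 0` expresses `β i` through `⟨N, ξ i⟩`.
    have hβ : ∀ i t, β i t = -l / k ^ 2 := fun i t => by
      have h1 := ((hT t).inner ℝ (hξ' i t)).deriv
      rw [show (fun t => ⟪vec 1 t, ξ i t⟫) = fun _ => (0 : ℝ) from funext fun t => hLeg t i,
        deriv_const] at h1
      simp only [inner_add_right, inner_smul_right, inner_smul_left, hTT,
        real_inner_comm (fT t) (vec 1 t), hfT_T, conj_trivial, hkc] at h1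
      have h2 := congrArg (fun v => ⟪v, ξ i t⟫) (hNV t)
      simp only [inner_smul_left, hVξ, conj_trivial] at h2
      field_simp
      have h3 : β i t = -(k * ⟪vec 2 t, ξ i t⟫) := by linarith
      rw [h3]
      linear_combination -h2
    obtain ⟨b, hb⟩ : ∃ b, -l / k ^ 2 = b := ⟨_, rfl⟩
    rw [hb] at hβ
    have hlb : l = -b * k ^ 2 := by
      rw [← hb]
      field_simp
    have hkb : k ^ 2 = s * b ^ 2 := by
      rw [hlb] at hls
      have : k ^ 4 ≠ 0 := by positivity
      apply mul_left_cancel₀ this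
      linear_combination -hls
    -- The `fT`-component of the derivative of `k³ N = l ∑ i, ξ i`.
    have hα : ∀ t, ∑ i, α i t = 0 := fun t => by
      have h1 := ((hN t).const_smul (k ^ 3)).deriv
      have hV := (HasDerivAt.fun_sum (u := Finset.univ) fun i _ => hξ' i t).const_smul l
      have h2 := hV.deriv
      have h3 : k ^ 3 • vec 2 = l • (fun t => ∑ i, ξ i t) := funext hNV
      rw [h3, h2] at h1
      have h5 : ⟪fT t, fT t⟫ = 1 := by simp [hfT_norm]
      have h4 := congrArg (fun v => ⟪fT t, v⟫) h1
      simp only [inner_smul_right, inner_sum, inner_add_right, hfT_T, h5] at h4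
      simpa [hl0] using h4
    have key : ∃ ε : ℝ, (ε = 1 ∨ ε = -1) ∧ k = -ε * Real.sqrt s * b := by
      have h1 : (k - Real.sqrt s * b) * (k + Real.sqrt s * b) = 0 := by
        linear_combination hkb - b ^ 2 * hsq
      rcases mul_eq_zero.1 h1 with h1 | h1
      · exact ⟨-1, Or.inr rfl, by linarith⟩
      · exact ⟨1, Or.inl rfl, by linarith⟩
    obtain ⟨ε, hε, hkε⟩ := key
    have hε2 : ε ^ 2 = 1 := by rcases hε with rfl | rfl <;> norm_num
    refine ⟨ε, hε, b, hβ, hkε ▸ hk0, fun t => (hkc t).trans hkε, fun t => ?_, fun _ => ?_, hα⟩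
    · have h1 : vec 2 t = (l / k ^ 3) • ∑ i, ξ i t := by
        have h2 : k ^ 3 ≠ 0 := by positivity
        rw [div_eq_inv_mul, mul_smul, ← hNV t, smul_smul, inv_mul_cancel₀ h2, one_smul]
      rw [h1]
      congr 1
      rw [div_eq_div_iff (by positivity) hsp.ne', hlb]
      linear_combination -ε * k ^ 2 * hkε + k ^ 2 * Real.sqrt s * b * hε2
    · rw [hlb, hkb]
      ring
  · rintro ⟨ε, hε, b, -, -, hκ, hV, hl, -⟩ t
    have hkd : deriv (κ 1) = fun _ => 0 := by
      rw [show κ 1 = fun _ => -ε * Real.sqrt s * b from funext hκ]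
      simp
    have hε2 : ε ^ 2 = 1 := by rcases hε with rfl | rfl <;> norm_num
    rw [hH, hkd, hκ, hV, hl, deriv_const]
    simp only [mul_zero, zero_smul, sub_zero, zero_sub, smul_smul, ← neg_smul]
    congr 1
    field_simp
    linear_combination (-b ^ 3 * Real.sqrt s ^ 2 * (ε ^ 2 + 1)) * hε2 - b ^ 3 * hsq
end
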